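/- Let P be a finite super logic program with least static expansion \overline{P}. Then for every natural number n, P^n ⊆ \overline{P} ∩ L*_not; in particular, for the fixpoint index n0 with P^{n0} = P^{n0+1}, P^{n0} ⊆ \overline{P} ∩ L*_not. -/

import Mathlib

/-!
The inclusion is proved by induction on `n`. The inductive step holds for every set `S` of formulas
with `P ⊆ S ⊆ Pbar` in the role of `P^n` (`pStep_subset`), and two facts carry it.

* Everything that `Pbar` adds to `P` concerns default atoms only: the added formulas `not F`, the
  axioms, and the conclusions of the invariance rule are all of this kind, so `Pbar` is axiomatised
  propositionally by `P` together with those of its members whose truth depends only on the default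
  atoms (`mem_cnNot_of_defaultOnly`). Consequently an interpretation that satisfies `S` and has the
  same default part as a model of `Pbar` is itself a model of `Pbar`, and so every minimal model of
  `Pbar` is a minimal model of `S` (`IsMinModel.of_expansion`).
* If `S ⊨_min ¬E₁ ∧ … ∧ ¬Eₘ → ¬E₀`, then, with `D = E₁ ∨ … ∨ Eₘ`, the first fact gives
  `Pbar ⊨_min ¬(E₀ ∧ ¬D)`, hence `not (E₀ ∧ ¬D) ∈ Pbar`. In a model of `Pbar`, the distributive
  axiom turns `not E₁ ∧ … ∧ not Eₘ` into `not D`, then `not D` and `not (E₀ ∧ ¬D)` give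
  `not (D ∨ (E₀ ∧ ¬D))`; by the invariance rule this is `not (D ∨ E₀)`, which yields `not E₀`
  (`CnClosed.sat_default_impl`).
-/

/-- Formulas of the modal language `L_not` over the set `At` of objective atoms.
`not F` is the default negation atom for a formula `F` (arbitrary nesting allowed). -/
inductive Fml (At : Type) : Type
  | atom : At → Fml At
  | tru : Fml At
  | fls : Fml At
  | neg : Fml At → Fml At
  | conj : Fml At → Fml At → Fml At
  | disj : Fml At → Fml At → Fml At
  | impl : Fml At → Fml At → Fml At
  | equiv : Fml At → Fml At → Fml At
  | not : Fml At → Fml At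

/-- An interpretation of `L_not`: a truth value for every objective atom and for
every default atom `not F` (the latter treated as new propositional atoms). -/
structure Interp (At : Type) where
  obj : At → Prop
  dflt : Fml At → Prop

/-- Classical satisfaction of a formula by an interpretation. -/
def Interp.sat {At : Type} (I : Interp At) : Fml At → Prop
  | Fml.atom a => I.obj a
  | Fml.tru => True
  | Fml.fls => False
  | Fml.neg F => ¬ Interp.sat I F
  | Fml.conj F G => Interp.sat I F ∧ Interp.sat I G
  | Fml.disj F G => Interp.sat I F ∨ Interp.sat I G
  | Fml.impl F G => Interp.sat I F → Interp.sat I G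
  | Fml.equiv F G => (Interp.sat I F ↔ Interp.sat I G)
  | Fml.not F => I.dflt F

/-- `I` is a model of the theory `T`. -/
def Interp.satTheory {At : Type} (I : Interp At) (T : Set (Fml At)) : Prop :=
  ∀ F ∈ T, I.sat F

/-- A set `S` contains `T`, the axioms (CA) and (DA), and is closed under
classical propositional consequence and the invariance rule (IR). -/
def CnClosed {At : Type} (T S : Set (Fml At)) : Prop :=
  T ⊆ S ∧
  Fml.not Fml.fls ∈ S ∧
  Fml.neg (Fml.not Fml.tru) ∈ S ∧
  (∀ F G : Fml At,
    Fml.equiv (Fml.not (Fml.disj F G)) (Fml.conj (Fml.not F) (Fml.not G)) ∈ S) ∧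
  (∀ F : Fml At, (∀ I : Interp At, I.satTheory S → I.sat F) → F ∈ S) ∧
  (∀ F G : Fml At, Fml.equiv F G ∈ S → Fml.equiv (Fml.not F) (Fml.not G) ∈ S)

/-- `Cn_not(T)`: the smallest set of formulas containing `T`, the axioms (CA), (DA),
closed under propositional consequence and the invariance rule (IR). -/
def CnNot {At : Type} (T : Set (Fml At)) : Set (Fml At) :=
  ⋂₀ {S | CnClosed T S}

/-- `M` is smaller than `N`: they agree on all default atoms and the objective atoms
true in `M` form a proper subset of those true in `N`. -/
def Smaller {At : Type} (M N : Interp At) : Prop :=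
  M.dflt = N.dflt ∧ {a | M.obj a} ⊂ {a | N.obj a}

/-- `M` is a minimal model of `T`. -/
def IsMinModel {At : Type} (T : Set (Fml At)) (M : Interp At) : Prop :=
  M.satTheory T ∧ ∀ N : Interp At, N.satTheory T → ¬ Smaller N M

/-- `T ⊨_min F`: `F` is true in all minimal models of `T`. -/
def MinEntails {At : Type} (T : Set (Fml At)) (F : Fml At) : Prop :=
  ∀ M : Interp At, IsMinModel T M → M.sat F

/-- `Td` is a static expansion of `T`. -/
def IsStaticExpansion {At : Type} (T Td : Set (Fml At)) : Prop :=
  Td = CnNot (T ∪ {G | ∃ F : Fml At, MinEntails Td (Fml.neg F) ∧ G = Fml.not F})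

/-- `Tbar` is the least static expansion of `T`. -/
def IsLeastStaticExpansion {At : Type} (T Tbar : Set (Fml At)) : Prop :=
  IsStaticExpansion T Tbar ∧ ∀ Td : Set (Fml At), IsStaticExpansion T Td → Tbar ⊆ Td

/-- A clause of a super logic program:
`A1 ∨ … ∨ Ak ← B1 ∧ … ∧ Bm ∧ not C1 ∧ … ∧ not Cn`, where the `Ai` (head) and
`Bi` (posBody) are objective atoms and the `Ci` (negBody) are finite
conjunctions of objective atoms. -/
structure Clause (At : Type) where
  head : List At
  posBody : List At
  negBody : List (List At)

/-- Valuations of the objective atoms (`Obj`). -/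
abbrev ObjVal (At : Type) := At → Prop

/-- Valuations of the default atoms `not(p1 ∧ … ∧ pn)`, indexed by the list
`[p1, …, pn]` of atoms of the conjunction. -/
abbrev DefVal (At : Type) := List At → Prop

/-- `Def`: the valuations of the default atoms making `not(true)`
(the empty conjunction case) false. -/
def DefSet (At : Type) : Set (DefVal At) := {d | ¬ d []}

/-- Satisfaction of a clause by a reduced interpretation `I_obj ∪ I_def`. -/
def satClause {At : Type} (Io : ObjVal At) (Id : DefVal At) (c : Clause At) : Prop :=
  ((∀ b ∈ c.posBody, Io b) ∧ (∀ C ∈ c.negBody, Id C)) → ∃ a ∈ c.head, Io a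

/-- `I_obj ∪ I_def` is a model of the super program `P`. -/
def satProg {At : Type} (Io : ObjVal At) (Id : DefVal At) (P : Set (Clause At)) : Prop :=
  ∀ c ∈ P, satClause Io Id c

/-- `I_obj ∪ I_def` is a minimal model of `P`: it is a model and no model with the
same default part has a strictly smaller set of true objective atoms. -/
def IsMinModelProg {At : Type} (P : Set (Clause At)) (Io : ObjVal At) (Id : DefVal At) : Prop :=
  satProg Io Id P ∧
  ∀ Io' : ObjVal At, satProg Io' Id P → ¬ ({a | Io' a} ⊂ {a | Io a})

/-- `I_def` is given by the set `O` of objective valuations: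
`I_def ⊨ not(p1∧…∧pn)` iff every valuation in `O` satisfies `¬(p1∧…∧pn)`. -/
def givenBy {At : Type} (Id : DefVal At) (O : Set (ObjVal At)) : Prop :=
  ∀ E : List At, Id E ↔ ∀ Io ∈ O, ∃ p ∈ E, ¬ Io p

/-- The operator `Φ_P`: objective parts of minimal models of `P` whose default part
belongs to `D`. -/
def PhiOp {At : Type} (P : Set (Clause At)) (D : Set (DefVal At)) : Set (ObjVal At) :=
  {Io | ∃ Id ∈ D, IsMinModelProg P Io Id}

/-- The operator `Ψ_P`: default valuations given by some nonempty subset of `O`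
and extendable to a model of `P`. -/
def PsiOp {At : Type} (P : Set (Clause At)) (O : Set (ObjVal At)) : Set (DefVal At) :=
  {Id | Id ∈ DefSet At ∧
        (∃ O' ⊆ O, O'.Nonempty ∧ givenBy Id O') ∧
        (∃ Io : ObjVal At, satProg Io Id P)}

/-- The operator `Λ_P := Ψ_P ∘ Φ_P`. -/
def LamOp {At : Type} (P : Set (Clause At)) : Set (DefVal At) → Set (DefVal At) :=
  PsiOp P ∘ PhiOp P

/-- The conjunction `p1 ∧ … ∧ pn` of a list of objective atoms
(the empty conjunction is `true`, a one-element list is just the atom). -/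
def conjAtoms {At : Type} : List At → Fml At
  | [] => Fml.tru
  | [p] => Fml.atom p
  | p :: q :: ps => Fml.conj (Fml.atom p) (conjAtoms (q :: ps))

/-- Conjunction of a list of formulas. -/
def conjList {At : Type} : List (Fml At) → Fml At
  | [] => Fml.tru
  | [F] => F
  | F :: G :: Gs => Fml.conj F (conjList (G :: Gs))

/-- Disjunction `p1 ∨ … ∨ pk` of a list of objective atoms (empty = `false`). -/
def disjAtoms {At : Type} : List At → Fml At
  | [] => Fml.fls
  | [p] => Fml.atom p
  | p :: q :: ps => Fml.disj (Fml.atom p) (disjAtoms (q :: ps))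

/-- The default atom `not(p1 ∧ … ∧ pn)`, with `not(true)` (the case `n = 0`)
identified with `false`. -/
def notConj {At : Type} : List At → Fml At
  | [] => Fml.fls
  | p :: ps => Fml.not (conjAtoms (p :: ps))

/-- The formula of `L_not` corresponding to a program clause. -/
def Clause.toFml {At : Type} (c : Clause At) : Fml At :=
  Fml.impl (conjList (c.posBody.map Fml.atom ++ c.negBody.map notConj))
    (disjAtoms c.head)

/-- The default part of the reduct of a full interpretation `I`:
its restriction to the default atoms `not(p1 ∧ … ∧ pn)`. -/
def reductDef {At : Type} (I : Interp At) : DefVal At :=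
  fun E => I.dflt (conjAtoms E)

/-- `L*_not`: propositional formulas over the objective atoms and the default atoms
`not(p1 ∧ … ∧ pn)` with `n ≥ 1` (the atom `not(true)`, i.e. the case `n = 0`,
is identified with the constant `false`, which is available as `Fml.fls`). -/
inductive LStar {At : Type} : Fml At → Prop
  | atom (a : At) : LStar (Fml.atom a)
  | tru : LStar Fml.tru
  | fls : LStar Fml.fls
  | dflt (p : At) (ps : List At) : LStar (Fml.not (conjAtoms (p :: ps)))
  | neg {F : Fml At} : LStar F → LStar (Fml.neg F)
  | conj {F G : Fml At} : LStar F → LStar G → LStar (Fml.conj F G)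
  | disj {F G : Fml At} : LStar F → LStar G → LStar (Fml.disj F G)
  | impl {F G : Fml At} : LStar F → LStar G → LStar (Fml.impl F G)
  | equiv {F G : Fml At} : LStar F → LStar G → LStar (Fml.equiv F G)

/-- Classical propositional consequence within `L*_not`
(default atoms treated as new propositional atoms). -/
def CnStar {At : Type} (S : Set (Fml At)) : Set (Fml At) :=
  {F | LStar F ∧ ∀ I : Interp At, I.satTheory S → I.sat F}

/-- One step of the fixed point construction:
`Cn(P ∪ {not E1 ∧ … ∧ not Em → not E0 : S ⊨_min ¬E1 ∧ … ∧ ¬Em → ¬E0})`,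
where the `Ei` range over conjunctions of objective atoms, `E0` may be the empty
conjunction `true`, and `not(true)` is identified with `false`. -/
def PStep {At : Type} (P0 S : Set (Fml At)) : Set (Fml At) :=
  CnStar (P0 ∪
    {F | ∃ (Es : List (List At)) (E0 : List At),
      F = Fml.impl (conjList (Es.map notConj)) (notConj E0) ∧
      MinEntails S
        (Fml.impl (conjList (Es.map (fun E => Fml.neg (conjAtoms E))))
          (Fml.neg (conjAtoms E0)))})

/-- The sequence `P^0 = P`, `P^{n+1} = PStep P (P^n)`. -/
def PSeq {At : Type} (P : Set (Clause At)) : ℕ → Set (Fml At)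
  | 0 => Clause.toFml '' P
  | n + 1 => PStep (Clause.toFml '' P) (PSeq P n)

/-! ### Conjunctions, disjunctions and the language `L*_not` -/

lemma sat_conjList {At : Type} (I : Interp At) (L : List (Fml At)) :
    I.sat (conjList L) ↔ ∀ F ∈ L, I.sat F := by
  induction L with
  | nil => simp [conjList, Interp.sat]
  | cons F L ih =>
    cases L with
    | nil => simp [conjList]
    | cons G L => simp only [conjList, Interp.sat, ih, List.forall_mem_cons]

lemma lStar_conjList {At : Type} (L : List (Fml At)) (h : ∀ F ∈ L, LStar F) :
    LStar (conjList L) := by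
  induction L with
  | nil => exact .tru
  | cons F L ih =>
    cases L with
    | nil => exact h F (by simp)
    | cons G L => exact .conj (h F (by simp)) (ih fun H hH => h H (List.mem_cons_of_mem _ hH))

lemma lStar_disjAtoms {At : Type} (L : List At) : LStar (disjAtoms L) := by
  induction L with
  | nil => exact .fls
  | cons p L ih =>
    cases L with
    | nil => exact .atom p
    | cons q L => exact .disj (.atom p) ih

lemma lStar_notConj {At : Type} (L : List At) : LStar (notConj L) := by
  cases L with
  | nil => exact .fls
  | cons p L => exact .dflt p L

lemma lStar_toFml {At : Type} (c : Clause At) : LStar c.toFml := by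
  refine .impl (lStar_conjList _ fun F hF => ?_) (lStar_disjAtoms _)
  rcases List.mem_append.1 hF with hF | hF <;> obtain ⟨x, -, rfl⟩ := List.mem_map.1 hF
  · exact .atom x
  · exact lStar_notConj x

/-- The disjunction of the conjunctions `⋀ E`, for `E` in the list (empty = `false`). -/
def disjConjs {At : Type} : List (List At) → Fml At
  | [] => Fml.fls
  | E :: Es => Fml.disj (conjAtoms E) (disjConjs Es)

lemma sat_disjConjs {At : Type} (I : Interp At) (Es : List (List At)) :
    I.sat (disjConjs Es) ↔ ∃ E ∈ Es, I.sat (conjAtoms E) := by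
  induction Es with
  | nil => simp [disjConjs, Interp.sat]
  | cons E Es ih => simp [disjConjs, Interp.sat, ih]

/-! ### Consequence under `Cn_not` and minimal models of static expansions -/

lemma cnClosed_cnNot {At : Type} (T : Set (Fml At)) : CnClosed T (CnNot T) := by
  refine ⟨fun F hF S hS => hS.1 hF, fun S hS => hS.2.1, fun S hS => hS.2.2.1,
    fun F G S hS => hS.2.2.2.1 F G, fun F hF S hS => ?_, fun F G h S hS => ?_⟩
  · exact hS.2.2.2.2.1 F fun I hI => hF I fun G hG => hI G (hG S hS)
  · exact hS.2.2.2.2.2 F G (h S hS)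

/-- The truth value of `F` depends only on the default atoms. -/
def DefaultOnly {At : Type} (F : Fml At) : Prop :=
  ∀ I J : Interp At, I.dflt = J.dflt → I.sat F → J.sat F

/-- If the formulas in `U` depend only on the default atoms, then every member of `Cn_not(T₀ ∪ U)`
is a propositional consequence of `T₀` and of those members of `Cn_not(T₀ ∪ U)` that depend only on
the default atoms. -/
lemma mem_cnNot_of_defaultOnly {At : Type} {T₀ U : Set (Fml At)} (hU : ∀ G ∈ U, DefaultOnly G)
    {F : Fml At} (hF : F ∈ CnNot (T₀ ∪ U)) {I : Interp At} (h₀ : I.satTheory T₀)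
    (hd : ∀ G ∈ CnNot (T₀ ∪ U), DefaultOnly G → I.sat G) : I.sat F := by
  obtain ⟨hT, hfls, htru, hdist, hcons, hinv⟩ := cnClosed_cnNot (T₀ ∪ U)
  set C := CnNot (T₀ ∪ U)
  let S : Set (Fml At) := {F | ∀ I : Interp At, I.satTheory T₀ →
    (∀ G ∈ C, DefaultOnly G → I.sat G) → I.sat F}
  -- Membership in `C` is needed for the invariance rule, whose premise is taken from `S`.
  have hSC : S ⊆ C := fun F hF => hcons F fun I hI =>
    hF I (fun G hG => hI G (hT (Or.inl hG))) fun G hG _ => hI G hG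
  have key : ∀ G ∈ C, DefaultOnly G → G ∈ S := fun G hG hGd I _ hI => hI G hG hGd
  have hS : CnClosed (T₀ ∪ U) S := by
    refine ⟨?_, key _ hfls ?_, key _ htru ?_, fun F G => key _ (hdist F G) ?_, ?_,
      fun F G h => key _ (hinv F G (hSC h)) ?_⟩
    · rintro G (hG | hG)
      · exact fun I hI _ => hI G hG
      · exact key G (hT (Or.inr hG)) (hU G hG)
    · intro I J h; simp [Interp.sat, h]
    · intro I J h; simp [Interp.sat, h]
    · intro I J h; simp [Interp.sat, h]
    · exact fun F hF I h₀ hd => hF I fun G hG => hG I h₀ hd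
    · intro I J h; simp [Interp.sat, h]
  exact hF S hS I h₀ hd

lemma IsStaticExpansion.cnClosed {At : Type} {T Td : Set (Fml At)}
    (hTd : IsStaticExpansion T Td) :
    CnClosed (T ∪ {G | ∃ F : Fml At, MinEntails Td (Fml.neg F) ∧ G = Fml.not F}) Td := by
  have h := cnClosed_cnNot (T ∪ {G | ∃ F : Fml At, MinEntails Td (Fml.neg F) ∧ G = Fml.not F})
  rwa [← show Td = _ from hTd] at h

/-- For `T ⊆ S ⊆ Td` with `Td` a static expansion of `T`, minimal models of `Td` are minimal
models of `S`: a model of `S` smaller than a model of `Td` would again be a model of `Td`. -/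
lemma IsMinModel.of_expansion {At : Type} {T S Td : Set (Fml At)} (hTd : IsStaticExpansion T Td)
    (hTS : T ⊆ S) (hSTd : S ⊆ Td) {M : Interp At} (hM : IsMinModel Td M) : IsMinModel S M := by
  refine ⟨fun F hF => hM.1 F (hSTd hF), fun N hN hlt => hM.2 N (fun F hF => ?_) hlt⟩
  rw [hTd] at hF
  refine mem_cnNot_of_defaultOnly ?_ hF (fun G hG => hN G (hTS hG)) fun G hG hGd => ?_
  · rintro _ ⟨F, -, rfl⟩ I J h
    simp [Interp.sat, h]
  · rw [← hTd] at hG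
    exact hGd M N hlt.1.symm (hM.1 G hG)

/-! ### Default implications in a static expansion -/

/-- In a set closed under `Cn_not`, `not (E₀ ∧ ¬(E₁ ∨ … ∨ Eₘ))` forces
`not E₁ ∧ … ∧ not Eₘ → not E₀`. -/
lemma CnClosed.sat_default_impl {At : Type} {T C : Set (Fml At)} (hC : CnClosed T C)
    {Es : List (List At)} {E₀ : List At}
    (h : Fml.not (Fml.conj (conjAtoms E₀) (Fml.neg (disjConjs Es))) ∈ C)
    {I : Interp At} (hI : I.satTheory C) :
    I.sat (Fml.impl (conjList (Es.map notConj)) (notConj E₀)) := by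
  obtain ⟨-, hfls, htru, hdist, hcons, hinv⟩ := hC
  have hdist' (F G : Fml At) : I.dflt (F.disj G) ↔ I.dflt F ∧ I.dflt G := hI _ (hdist F G)
  have htru' : ¬ I.dflt Fml.tru := hI _ htru
  have hnotConj (E : List At) : I.sat (notConj E) ↔ I.dflt (conjAtoms E) := by
    cases E with
    | nil => simpa [notConj, conjAtoms, Interp.sat] using htru'
    | cons p E => rfl
  have hD : I.sat (conjList (Es.map notConj)) → I.dflt (disjConjs Es) := by
    rw [sat_conjList]
    clear h
    induction Es with
    | nil => exact fun _ => hI _ hfls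
    | cons E Es ih =>
      simp only [List.map_cons, List.forall_mem_cons]
      exact fun hEs => (hdist' _ _).2 ⟨(hnotConj E).1 hEs.1, ih hEs.2⟩
  intro hEs
  have hequiv : Fml.equiv
      ((disjConjs Es).disj ((conjAtoms E₀).conj (disjConjs Es).neg))
      ((disjConjs Es).disj (conjAtoms E₀)) ∈ C := by
    refine hcons _ fun J _ => ?_
    simp only [Interp.sat]
    tauto
  have hnot : I.dflt _ ↔ I.dflt _ := hI _ (hinv _ _ hequiv)
  exact (hnotConj E₀).2 ((hdist' _ _).1 (hnot.1 ((hdist' _ _).2 ⟨hD hEs, hI _ h⟩))).2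

lemma pStep_subset {At : Type} {T S Td : Set (Fml At)} (hTd : IsStaticExpansion T Td)
    (hTS : T ⊆ S) (hSTd : S ⊆ Td) : PStep T S ⊆ Td := by
  have hC := hTd.cnClosed
  rintro F ⟨-, hF⟩
  refine hC.2.2.2.2.1 F fun I hI => hF I ?_
  rintro G (hG | ⟨Es, E₀, rfl, hmin⟩)
  · exact hI G (hSTd (hTS hG))
  · refine hC.sat_default_impl (hC.1 (Or.inr ⟨_, fun M hM => ?_, rfl⟩)) hI
    have := hmin M (hM.of_expansion hTd hTS hSTd)
    simp only [Interp.sat, sat_conjList, List.forall_mem_map, sat_disjConjs] at this ⊢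
    rintro ⟨h₀, hEs⟩
    exact this (fun E hE h => hEs ⟨E, hE, h⟩) h₀

/-- Let `P` be a finite super logic program with least static expansion `Pbar`.
Then for every `n`, `P^n ⊆ Pbar ∩ L*_not`; in particular this holds for any
fixpoint index `n0` with `P^{n0} = P^{n0+1}`. -/
theorem pseq_subset_restriction {At : Type} [Finite At]
    (P : Set (Clause At)) (hPfin : P.Finite)
    (Pbar : Set (Fml At)) (hbar : IsLeastStaticExpansion (Clause.toFml '' P) Pbar) :
    (∀ n : ℕ, PSeq P n ⊆ Pbar ∩ {F : Fml At | LStar F}) ∧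
    (∀ n0 : ℕ, PSeq P n0 = PSeq P (n0 + 1) →
      PSeq P n0 ⊆ Pbar ∩ {F : Fml At | LStar F}) := by
  have hTP : Clause.toFml '' P ⊆ Pbar := fun F hF => hbar.1.cnClosed.1 (Or.inl hF)
  have hL : ∀ F ∈ Clause.toFml '' P, LStar F := by
    rintro _ ⟨c, -, rfl⟩
    exact lStar_toFml c
  have main : ∀ n, Clause.toFml '' P ⊆ PSeq P n ∧ PSeq P n ⊆ Pbar ∩ {F : Fml At | LStar F} := by
    intro n
    induction n with
    | zero => exact ⟨subset_rfl, fun F hF => ⟨hTP hF, hL F hF⟩⟩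
    | succ n ih =>
      refine ⟨fun F hF => ⟨hL F hF, fun I hI => hI F (Or.inl hF)⟩, fun F hF => ⟨?_, hF.1⟩⟩
      exact pStep_subset hbar.1 ih.1 (fun G hG => (ih.2 hG).1) hF
  exact ⟨fun n => (main n).2, fun n _ => (main n).2⟩
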